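/- Let p ∈ Δ*_m, q ∈ Δ*_n, c ∈ ℝ^{m×n}, and let α_t > 0, β_t > 0. Let π^onl_t be any minimizer over C_{β_t} ∩ Γ(*,q) of α_t⟨c,π⟩ + KL(π𝟙|p), and let π^reg_t be the unique minimizer over Γ(*,q) of F^reg_t(π) = ⟨c,π⟩ + (1/α_t) KL(π𝟙|p) + (1/β_t) KL(π|π^ref). Then ‖π^onl_t 𝟙 − π^reg_t 𝟙‖₁ ≤ √(2 α_t log(mn) / β_t). -/

import Mathlib

open Finset Filter Topology ENNReal

noncomputable section

/-- Frobenius inner product `⟨c, π⟩ = ∑_{ij} c_ij π_ij`. -/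
def frob {m n : ℕ} (c π : Matrix (Fin m) (Fin n) ℝ) : ℝ := ∑ i, ∑ j, c i j * π i j

/-- Row sums `π𝟙`. -/
def rowSum {m n : ℕ} (π : Matrix (Fin m) (Fin n) ℝ) : Fin m → ℝ := fun i => ∑ j, π i j

/-- Column sums `πᵀ𝟙`. -/
def colSum {m n : ℕ} (π : Matrix (Fin m) (Fin n) ℝ) : Fin n → ℝ := fun j => ∑ i, π i j

/-- Kullback–Leibler divergence between nonnegative vectors. -/
def KLvec {k : ℕ} (a b : Fin k → ℝ) : ℝ := ∑ i, (a i * Real.log (a i / b i) - a i + b i)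

/-- Kullback–Leibler divergence between nonnegative matrices. -/
def KLmat {m n : ℕ} (a b : Matrix (Fin m) (Fin n) ℝ) : ℝ :=
  ∑ i, ∑ j, (a i j * Real.log (a i j / b i j) - a i j + b i j)

/-- The tipless simplex `Δ*_k`: strictly positive entries summing to 1. -/
def simplexPos (k : ℕ) : Set (Fin k → ℝ) := {p | (∀ i, 0 < p i) ∧ ∑ i, p i = 1}

/-- The simplex `Δ_k`: nonnegative entries summing to 1. -/
def simplexNN (k : ℕ) : Set (Fin k → ℝ) := {p | (∀ i, 0 ≤ p i) ∧ ∑ i, p i = 1}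

/-- Transport plans `Γ(p, q)`. -/
def Gamma {m n : ℕ} (p : Fin m → ℝ) (q : Fin n → ℝ) : Set (Matrix (Fin m) (Fin n) ℝ) :=
  {π | (∀ i j, 0 ≤ π i j) ∧ rowSum π = p ∧ colSum π = q}

/-- Half-relaxed plans `Γ(*, q)`. -/
def GammaStar {m n : ℕ} (q : Fin n → ℝ) : Set (Matrix (Fin m) (Fin n) ℝ) :=
  {π | (∀ i j, 0 ≤ π i j) ∧ colSum π = q}

/-- Reference plan `π^ref = (mn)⁻¹ 𝟙𝟙ᵀ`. -/
def piRef (m n : ℕ) : Matrix (Fin m) (Fin n) ℝ := fun _ _ => 1 / (m * n)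

/-- Optimal transport value `OT(p,q)`. -/
def OTval {m n : ℕ} (c : Matrix (Fin m) (Fin n) ℝ) (p : Fin m → ℝ) (q : Fin n → ℝ) : ℝ :=
  ⨅ π : Gamma p q, frob c π.1

/-- Entropic OT objective `⟨c,π⟩ + β⁻¹ KL(π|π^ref)`. -/
def eotObj {m n : ℕ} (c : Matrix (Fin m) (Fin n) ℝ) (β : ℝ) (π : Matrix (Fin m) (Fin n) ℝ) : ℝ :=
  frob c π + β⁻¹ * KLmat π (piRef m n)

/-- Entropic OT value `EOT_β(p,q)`. -/
def eotVal {m n : ℕ} (c : Matrix (Fin m) (Fin n) ℝ) (β : ℝ) (p : Fin m → ℝ) (q : Fin n → ℝ) : ℝ :=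
  ⨅ π : Gamma p q, eotObj c β π.1

/-- Gibbs kernel `K = e^{-βc}` (entrywise). -/
def gibbs {m n : ℕ} (c : Matrix (Fin m) (Fin n) ℝ) (β : ℝ) : Matrix (Fin m) (Fin n) ℝ :=
  fun i j => Real.exp (-(β * c i j))

/-- Annealed Sinkhorn scaling vectors `(a_t, b_t)`:
`b_0 = 𝟙`, `a_{t+1} = p ⊘ (K_t b_t)`, `b_{t+1} = q ⊘ (K_{t+1}ᵀ a_{t+1})`, `K_t = e^{-β_t c}`. -/
def sinkAB {m n : ℕ} (p : Fin m → ℝ) (q : Fin n → ℝ) (c : Matrix (Fin m) (Fin n) ℝ)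
    (β : ℕ → ℝ) : ℕ → (Fin m → ℝ) × (Fin n → ℝ)
  | 0 => (fun _ => 1, fun _ => 1)
  | t + 1 =>
    let prev := sinkAB p q c β t
    let a : Fin m → ℝ := fun i => p i / ∑ j, gibbs c (β t) i j * prev.2 j
    (a, fun j => q j / ∑ i, gibbs c (β (t + 1)) i j * a i)

/-- Annealed Sinkhorn primal iterate `π_t = diag(a_t) K_t diag(b_t)`. -/
def sinkPlan {m n : ℕ} (p : Fin m → ℝ) (q : Fin n → ℝ) (c : Matrix (Fin m) (Fin n) ℝ)
    (β : ℕ → ℝ) (t : ℕ) : Matrix (Fin m) (Fin n) ℝ :=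
  fun i j => (sinkAB p q c β t).1 i * gibbs c (β t) i j * (sinkAB p q c β t).2 j

/-- `ℓ¹` norm of a vector. -/
def l1vec {k : ℕ} (a : Fin k → ℝ) : ℝ := ∑ i, |a i|

/-- Oscillation semi-norm `‖c‖_osc = max c - min c`. -/
def cOsc {m n : ℕ} (c : Matrix (Fin m) (Fin n) ℝ) : ℝ :=
  (⨆ i, ⨆ j, c i j) - ⨅ i, ⨅ j, c i j

/-- `‖log p‖_∞`. -/
def logSup {k : ℕ} (p : Fin k → ℝ) : ℝ := ⨆ i, |Real.log (p i)|

/-- The rounding ("projection") procedure of Altschuler et al. (Algorithm 3). -/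
def roundPlan {m n : ℕ} (p : Fin m → ℝ) (q : Fin n → ℝ) (π : Matrix (Fin m) (Fin n) ℝ) :
    Matrix (Fin m) (Fin n) ℝ :=
  let π' : Matrix (Fin m) (Fin n) ℝ := fun i j => min 1 (p i / rowSum π i) * π i j
  let π'' : Matrix (Fin m) (Fin n) ℝ := fun i j => π' i j * min 1 (q j / colSum π' j)
  fun i j => π'' i j +
    (p i - rowSum π'' i) * (q j - colSum π'' j) / l1vec (fun i' => p i' - rowSum π'' i')

/-- Relaxed entropic objective `F^reg(π) = ⟨c,π⟩ + α⁻¹ KL(π𝟙|p) + β⁻¹ KL(π|π^ref)`. -/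
def Freg {m n : ℕ} (c : Matrix (Fin m) (Fin n) ℝ) (p : Fin m → ℝ) (α β : ℝ)
    (π : Matrix (Fin m) (Fin n) ℝ) : ℝ :=
  frob c π + α⁻¹ * KLvec (rowSum π) p + β⁻¹ * KLmat π (piRef m n)

/-- Dual functional for the relaxed entropic problem. -/
def dualFun {m n : ℕ} (p : Fin m → ℝ) (q : Fin n → ℝ) (c : Matrix (Fin m) (Fin n) ℝ)
    (α β : ℝ) (u : Fin m → ℝ) (v : Fin n → ℝ) : ℝ :=
  α⁻¹ * (∑ i, (1 - Real.exp (-(α * u i))) * p i) + ∑ j, v j * q j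
    - β⁻¹ * (∑ i, ∑ j, Real.exp (β * (u i + v j - c i j)) * piRef m n i j) + β⁻¹

/-- Dual functional of entropic OT. -/
def eotDual {m n : ℕ} (p : Fin m → ℝ) (q : Fin n → ℝ) (c : Matrix (Fin m) (Fin n) ℝ)
    (β : ℝ) (u : Fin m → ℝ) (v : Fin n → ℝ) : ℝ :=
  ∑ i, p i * u i + ∑ j, q j * v j
    + β⁻¹ * (1 - ∑ i, ∑ j, piRef m n i j * Real.exp (β * (u i + v j - c i j)))

/-- The set `C_β` of plans of the form `diag(a) e^{-βc} diag(b)` with `a, b ≥ 0`. -/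
def scalingSet {m n : ℕ} (c : Matrix (Fin m) (Fin n) ℝ) (β : ℝ) :
    Set (Matrix (Fin m) (Fin n) ℝ) :=
  {π | ∃ a : Fin m → ℝ, ∃ b : Fin n → ℝ, (∀ i, 0 ≤ a i) ∧ (∀ j, 0 ≤ b j) ∧
    π = fun i j => a i * Real.exp (-(β * c i j)) * b j}

/-!
The regularized minimizer `P` over `Γ(*,q)` is entrywise positive because the slope of
`x log x` at `0` is `-∞`, so the gradient of `F^reg` at `P` depends on the column only. This has two
consequences. First, `P ∈ C_β`, so `P` competes in the online problem. Second, the first-order term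
of the Bregman expansion of `F^reg` at `P` vanishes on `Γ(*,q)`:
`F^reg(π) = F^reg(P) + α⁻¹ KL(π𝟙|P𝟙) + β⁻¹ KL(π|P)`.
For the online minimizer `π`, the terms `⟨c,π⟩ + α⁻¹ KL(π𝟙|p)` are at most those of `P`, whence
`KL(π𝟙|P𝟙) ≤ (α/β) KL(π|π^ref) ≤ (α/β) log (mn)`, and Pinsker's inequality concludes.
-/

section ScalarTerm

open InformationTheory

variable {a b r t x y : ℝ}

/-- The scalar Kullback–Leibler summand `a log (a / b) - a + b`, of which `KLvec` and `KLmat` are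
sums. It is the divergence only for `0 < b`: Lean's `a / 0 = 0` makes it `-a` at `b = 0`. -/
def klTerm (a b : ℝ) : ℝ := a * Real.log (a / b) - a + b

lemma klTerm_eq_mul_klFun (hb : b ≠ 0) : klTerm a b = b * klFun (a / b) := by
  unfold klTerm klFun
  field_simp
  ring

lemma klTerm_nonneg (ha : 0 ≤ a) (hb : 0 < b) : 0 ≤ klTerm a b := by
  rw [klTerm_eq_mul_klFun hb.ne']
  exact mul_nonneg hb.le (klFun_nonneg (by positivity))

lemma convexOn_klTerm (hb : 0 < b) : ConvexOn ℝ (Set.Ici 0) (klTerm · b) := by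
  refine ⟨convex_Ici 0, fun x hx y hy s t hs ht hst => ?_⟩
  have hconv := convexOn_klFun.2 (div_nonneg hx hb.le) (div_nonneg hy hb.le) hs ht hst
  simp only [klTerm_eq_mul_klFun hb.ne', smul_eq_mul] at hconv ⊢
  rw [add_div, mul_div_assoc, mul_div_assoc]
  linear_combination b * hconv

lemma hasDerivAt_klTerm (ha : a ≠ 0) (hb : b ≠ 0) :
    HasDerivAt (klTerm · b) (Real.log (a / b)) a := by
  have hcomp := ((hasDerivAt_klFun (div_ne_zero ha hb)).comp a
    ((hasDerivAt_id a).div_const b)).const_mul b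
  refine (hcomp.congr_of_eventuallyEq (.of_forall fun _ => klTerm_eq_mul_klFun hb)).congr_deriv ?_
  field_simp

lemma klTerm_eq_add_add_klTerm (hb : b ≠ 0) (hr : r ≠ 0) :
    klTerm a r = klTerm b r + (a - b) * Real.log (b / r) + klTerm a b := by
  unfold klTerm
  rcases eq_or_ne a 0 with rfl | ha
  · ring
  · rw [Real.log_div ha hr, Real.log_div ha hb, Real.log_div hb hr]
    ring

lemma klTerm_mul_left (ht : t ≠ 0) (hb : b ≠ 0) :
    klTerm (t * y) b = (1 - t) * klTerm 0 b + t * klTerm y b + t * Real.log t * y := by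
  unfold klTerm
  rcases eq_or_ne y 0 with rfl | hy
  · ring
  · rw [mul_div_assoc, Real.log_mul ht (div_ne_zero hy hb)]
    ring

/-- The excess term `t log t · y` records that the slope of `klTerm` at `0` is `-∞`. -/
lemma klTerm_segment_le (hx : 0 ≤ x) (hy : 0 ≤ y) (hb : 0 < b) (ht0 : 0 < t) (ht1 : t ≤ 1) :
    klTerm ((1 - t) * x + t * y) b ≤
      (1 - t) * klTerm x b + t * klTerm y b + t * Real.log t * (if x = 0 then y else 0) := by
  split_ifs with h
  · simpa only [h, mul_zero, zero_add] using (klTerm_mul_left ht0.ne' hb.ne').le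
  · simpa only [mul_zero, add_zero, smul_eq_mul] using
      (convexOn_klTerm hb).2 hx hy (sub_nonneg.2 ht1) ht0.le (sub_add_cancel 1 t)

lemma klTerm_le_of_le_one (ha0 : 0 ≤ a) (ha1 : a ≤ 1) (hb : b ≠ 0) :
    klTerm a b ≤ a * (-Real.log b - 1) + b := by
  unfold klTerm
  rcases ha0.eq_or_lt with rfl | ha
  · simp
  · rw [Real.log_div ha.ne' hb]
    linear_combination mul_nonpos_of_nonneg_of_nonpos ha0 (Real.log_nonpos ha0 ha1)

end ScalarTerm

section Pinsker

open InformationTheory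

lemma three_mul_sq_le_mul_klFun {x : ℝ} (hx : 0 ≤ x) :
    3 * (x - 1) ^ 2 ≤ (2 * x + 4) * klFun x := by
  let g : ℝ → ℝ := fun y => (2 * y + 4) * klFun y - 3 * (y - 1) ^ 2
  let g' : ℝ → ℝ := fun y => 4 * ((y + 1) * Real.log y - 2 * (y - 1))
  have hg' {y : ℝ} (hy : y ≠ 0) : HasDerivAt g (g' y) y := by
    refine (((((hasDerivAt_id y).const_mul 2).add_const 4).mul (hasDerivAt_klFun hy)).sub
      ((((hasDerivAt_id y).sub_const 1).pow 2).const_mul 3)).congr_deriv ?_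
    simp only [id, klFun, g']
    ring
  have hg'' {y : ℝ} (hy : y ≠ 0) : HasDerivAt g' (4 * (Real.log y - (1 - y⁻¹))) y := by
    refine (((((hasDerivAt_id y).add_const 1).mul (Real.hasDerivAt_log hy)).sub
      (((hasDerivAt_id y).sub_const 1).const_mul 2)).const_mul 4).congr_deriv ?_
    simp only [id]
    field_simp
    ring
  have hconvex : ConvexOn ℝ (Set.Ici 0) g := by
    refine convexOn_of_hasDerivWithinAt2_nonneg (convex_Ici 0) (by fun_prop)
      (f' := g') (f'' := fun y => 4 * (Real.log y - (1 - y⁻¹))) ?_ ?_ ?_ <;>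
      rw [interior_Ici] <;> intro y hy
    · exact (hg' (ne_of_gt hy)).hasDerivWithinAt
    · exact (hg'' (ne_of_gt hy)).hasDerivWithinAt
    · exact mul_nonneg zero_le_four (sub_nonneg.2 (Real.one_sub_inv_le_log_of_pos hy))
  have hmin : IsMinOn g (Set.Ici 0) 1 := by
    refine hconvex.isMinOn_of_rightDeriv_eq_zero (by simp) ?_
    rw [(hg' one_ne_zero).hasDerivWithinAt.derivWithin (uniqueDiffWithinAt_Ioi 1)]
    simp [g']
  have hg1 : g 1 = 0 := by simp [g, klFun_one]
  exact sub_nonneg.1 (hg1.symm.le.trans (hmin hx))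

lemma sq_sub_le_mul_klTerm {a b : ℝ} (ha : 0 ≤ a) (hb : 0 < b) :
    (a - b) ^ 2 ≤ (2 * a + 4 * b) / 3 * klTerm a b := by
  have key := three_mul_sq_le_mul_klFun (div_nonneg ha hb.le)
  rw [klTerm_eq_mul_klFun hb.ne']
  calc (a - b) ^ 2 = b ^ 2 / 3 * (3 * (a / b - 1) ^ 2) := by field_simp
    _ ≤ b ^ 2 / 3 * ((2 * (a / b) + 4) * klFun (a / b)) := by gcongr
    _ = (2 * a + 4 * b) / 3 * (b * klFun (a / b)) := by field_simp

lemma sq_sum_abs_sub_le_mul_sum_klTerm {ι : Type*} (s : Finset ι) {a b : ι → ℝ}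
    (ha : ∀ i ∈ s, 0 ≤ a i) (hb : ∀ i ∈ s, 0 < b i) :
    (∑ i ∈ s, |a i - b i|) ^ 2 ≤
      (2 * (∑ i ∈ s, a i) + 4 * ∑ i ∈ s, b i) / 3 * ∑ i ∈ s, klTerm (a i) (b i) := by
  rw [mul_sum s a, mul_sum s b, ← sum_add_distrib, sum_div]
  refine sum_sq_le_sum_mul_sum_of_sq_le_mul s (fun i hi => ?_)
    (fun i hi => klTerm_nonneg (ha i hi) (hb i hi)) (fun i hi => ?_)
  · have := ha i hi
    have := hb i hi
    positivity
  · rw [sq_abs]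
    exact sq_sub_le_mul_klTerm (ha i hi) (hb i hi)

lemma sq_l1vec_sub_le_two_mul_KLvec {k : ℕ} {a b : Fin k → ℝ}
    (ha : a ∈ simplexNN k) (hb : b ∈ simplexPos k) :
    l1vec (fun i => a i - b i) ^ 2 ≤ 2 * KLvec a b := by
  have h := sq_sum_abs_sub_le_mul_sum_klTerm univ (fun i _ => ha.1 i) (fun i _ => hb.1 i)
  rw [ha.2, hb.2] at h
  norm_num at h
  exact h

end Pinsker

section Plans

variable {m n : ℕ} {q : Fin n → ℝ} {P : Matrix (Fin m) (Fin n) ℝ}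

lemma frob_add (c P Q : Matrix (Fin m) (Fin n) ℝ) : frob c (P + Q) = frob c P + frob c Q := by
  simp only [frob, Matrix.add_apply, mul_add, sum_add_distrib]

lemma frob_smul (c : Matrix (Fin m) (Fin n) ℝ) (s : ℝ) (P : Matrix (Fin m) (Fin n) ℝ) :
    frob c (s • P) = s * frob c P := by
  simp only [frob, Matrix.smul_apply, smul_eq_mul, mul_sum, mul_left_comm]

lemma frob_sub (c P Q : Matrix (Fin m) (Fin n) ℝ) : frob c (P - Q) = frob c P - frob c Q := by
  simp only [frob, Matrix.sub_apply, mul_sub, sum_sub_distrib]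

lemma frob_single (c : Matrix (Fin m) (Fin n) ℝ) (i : Fin m) (j : Fin n) (x : ℝ) :
    frob c (Matrix.single i j x) = c i j * x := by
  simp [frob, Matrix.single_apply, ite_and]

lemma frob_eq_sum_colSum {c : Matrix (Fin m) (Fin n) ℝ} {v : Fin n → ℝ} (hc : ∀ i j, c i j = v j)
    (P : Matrix (Fin m) (Fin n) ℝ) : frob c P = ∑ j, v j * colSum P j := by
  simp only [frob, hc, colSum, mul_sum]
  exact sum_comm

lemma rowSum_add (P Q : Matrix (Fin m) (Fin n) ℝ) : rowSum (P + Q) = rowSum P + rowSum Q := by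
  ext i
  simp only [rowSum, Matrix.add_apply, Pi.add_apply, sum_add_distrib]

lemma rowSum_smul (s : ℝ) (P : Matrix (Fin m) (Fin n) ℝ) : rowSum (s • P) = s • rowSum P := by
  ext i
  simp only [rowSum, Matrix.smul_apply, Pi.smul_apply, smul_eq_mul, mul_sum]

lemma colSum_add (P Q : Matrix (Fin m) (Fin n) ℝ) : colSum (P + Q) = colSum P + colSum Q := by
  ext j
  simp only [colSum, Matrix.add_apply, Pi.add_apply, sum_add_distrib]

lemma colSum_smul (s : ℝ) (P : Matrix (Fin m) (Fin n) ℝ) : colSum (s • P) = s • colSum P := by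
  ext j
  simp only [colSum, Matrix.smul_apply, Pi.smul_apply, smul_eq_mul, mul_sum]

lemma colSum_sub (P Q : Matrix (Fin m) (Fin n) ℝ) : colSum (P - Q) = colSum P - colSum Q := by
  ext j
  simp only [colSum, Matrix.sub_apply, Pi.sub_apply, sum_sub_distrib]

lemma colSum_single (i : Fin m) (j : Fin n) (x : ℝ) :
    colSum (Matrix.single i j x) = Pi.single j x := by
  ext j'
  simp [colSum, Matrix.single_apply, ite_and, Pi.single_apply, eq_comm]

lemma piRef_pos (i : Fin m) (j : Fin n) : 0 < piRef m n i j := by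
  have hm : 0 < (m : ℝ) := Nat.cast_pos.2 i.pos
  have hn : 0 < (n : ℝ) := Nat.cast_pos.2 j.pos
  unfold piRef
  positivity

lemma convex_GammaStar : Convex ℝ (GammaStar (m := m) q) := by
  rintro P ⟨hP, hPq⟩ Q ⟨hQ, hQq⟩ s t hs ht hst
  refine ⟨fun i j => add_nonneg (mul_nonneg hs (hP i j)) (mul_nonneg ht (hQ i j)), ?_⟩
  rw [colSum_add, colSum_smul, colSum_smul, hPq, hQq, ← add_smul, hst, one_smul]

lemma exists_pos_mem_GammaStar [NeZero m] (hq : ∀ j, 0 < q j) :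
    ∃ Q ∈ GammaStar (m := m) q, ∀ i j, 0 < Q i j := by
  have hm : 0 < (m : ℝ) := Nat.cast_pos.2 (NeZero.pos m)
  have hpos (j : Fin n) : 0 < q j / m := div_pos (hq j) hm
  refine ⟨fun _ j => q j / m, ⟨fun _ j => (hpos j).le, ?_⟩, fun _ j => hpos j⟩
  ext j
  simp [colSum, mul_div_cancel₀ _ hm.ne']

lemma neZero_of_mem_simplexPos {k : ℕ} {a : Fin k → ℝ} (ha : a ∈ simplexPos k) : NeZero k := by
  refine ⟨?_⟩
  rintro rfl
  simpa using ha.2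

lemma rowSum_mem_simplexNN (hq : ∑ j, q j = 1) (hP : P ∈ GammaStar q) :
    rowSum P ∈ simplexNN m := by
  refine ⟨fun i => sum_nonneg fun j _ => hP.1 i j, ?_⟩
  rw [← hq, ← hP.2]
  exact sum_comm

lemma rowSum_pos [NeZero n] (hP : ∀ i j, 0 < P i j) (i : Fin m) : 0 < rowSum P i :=
  sum_pos (fun j _ => hP i j) univ_nonempty

end Plans

section Divergence

variable {k m n : ℕ} {a b r : Fin k → ℝ} {P Q R : Matrix (Fin m) (Fin n) ℝ}

lemma KLvec_eq_sum_klTerm (a b : Fin k → ℝ) : KLvec a b = ∑ i, klTerm (a i) (b i) := rfl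

lemma KLmat_eq_sum_KLvec (P R : Matrix (Fin m) (Fin n) ℝ) : KLmat P R = ∑ i, KLvec (P i) (R i) :=
  rfl

lemma KLvec_nonneg (ha : ∀ i, 0 ≤ a i) (hb : ∀ i, 0 < b i) : 0 ≤ KLvec a b :=
  sum_nonneg fun i _ => klTerm_nonneg (ha i) (hb i)

lemma KLmat_nonneg (hP : ∀ i j, 0 ≤ P i j) (hR : ∀ i j, 0 < R i j) : 0 ≤ KLmat P R :=
  sum_nonneg fun i _ => KLvec_nonneg (hP i) (hR i)

lemma KLvec_eq_add_add_KLvec (hb : ∀ i, b i ≠ 0) (hr : ∀ i, r i ≠ 0) :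
    KLvec a r = KLvec b r + ∑ i, (a i - b i) * Real.log (b i / r i) + KLvec a b := by
  simp only [KLvec_eq_sum_klTerm, ← sum_add_distrib]
  exact sum_congr rfl fun i _ => klTerm_eq_add_add_klTerm (hb i) (hr i)

lemma KLmat_eq_add_add_KLmat (hQ : ∀ i j, Q i j ≠ 0) (hR : ∀ i j, R i j ≠ 0) :
    KLmat P R =
      KLmat Q R + ∑ i, ∑ j, (P i j - Q i j) * Real.log (Q i j / R i j) + KLmat P Q := by
  simp only [KLmat_eq_sum_KLvec, ← sum_add_distrib]
  exact sum_congr rfl fun i _ => KLvec_eq_add_add_KLvec (hQ i) (hR i)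

lemma convexOn_KLvec (hb : ∀ i, 0 < b i) : ConvexOn ℝ (Set.Ici 0) (KLvec · b) := by
  refine ⟨convex_Ici 0, fun x hx y hy s t hs ht hst => ?_⟩
  simp only [KLvec_eq_sum_klTerm, smul_eq_mul, mul_sum, ← sum_add_distrib]
  exact sum_le_sum fun i _ => (convexOn_klTerm (hb i)).2 (hx i) (hy i) hs ht hst

lemma KLmat_segment_le (hP : ∀ i j, 0 ≤ P i j) (hQ : ∀ i j, 0 ≤ Q i j) (hR : ∀ i j, 0 < R i j)
    {t : ℝ} (ht0 : 0 < t) (ht1 : t ≤ 1) :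
    KLmat ((1 - t) • P + t • Q) R ≤ (1 - t) * KLmat P R + t * KLmat Q R +
      t * Real.log t * ∑ i, ∑ j, if P i j = 0 then Q i j else 0 := by
  simp only [KLmat_eq_sum_KLvec, KLvec_eq_sum_klTerm, mul_sum, ← sum_add_distrib]
  exact sum_le_sum fun i _ => sum_le_sum fun j _ =>
    klTerm_segment_le (hP i j) (hQ i j) (hR i j) ht0 ht1

lemma hasDerivAt_KLvec (ha : ∀ i, a i ≠ 0) (hb : ∀ i, b i ≠ 0) (d : Fin k → ℝ) :
    HasDerivAt (fun s : ℝ => KLvec (a + s • d) b) (∑ i, d i * Real.log (a i / b i)) 0 := by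
  refine HasDerivAt.fun_sum fun i _ => ?_
  have hline : HasDerivAt (fun s : ℝ => a i + s * d i) (d i) 0 := by
    simpa using ((hasDerivAt_id (0 : ℝ)).mul_const (d i)).const_add (a i)
  have hterm : HasDerivAt (klTerm · (b i)) (Real.log (a i / b i)) (a i + 0 * d i) := by
    simpa only [zero_mul, add_zero] using hasDerivAt_klTerm (ha i) (hb i)
  exact (hterm.comp 0 hline).congr_deriv (mul_comm _ _)

lemma hasDerivAt_KLmat (hP : ∀ i j, P i j ≠ 0) (hR : ∀ i j, R i j ≠ 0)
    (D : Matrix (Fin m) (Fin n) ℝ) :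
    HasDerivAt (fun s : ℝ => KLmat (P + s • D) R)
      (∑ i, ∑ j, D i j * Real.log (P i j / R i j)) 0 :=
  HasDerivAt.fun_sum fun i _ => hasDerivAt_KLvec (hP i) (hR i) (D i)

lemma KLmat_piRef_le_log (hP : ∀ i j, 0 ≤ P i j) (hsum : ∑ i, ∑ j, P i j = 1) :
    KLmat P (piRef m n) ≤ Real.log (m * n) := by
  have hle (i : Fin m) (j : Fin n) : P i j ≤ 1 := calc
    P i j ≤ ∑ j, P i j := single_le_sum (fun j _ => hP i j) (mem_univ j)
    _ ≤ ∑ i, ∑ j, P i j :=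
      single_le_sum (f := fun i => ∑ j, P i j) (fun i _ => sum_nonneg fun j _ => hP i j)
        (mem_univ i)
    _ = 1 := hsum
  have hmass : ∑ i, ∑ j, piRef m n i j ≤ 1 := by
    simp only [piRef, sum_const, card_univ, Fintype.card_fin, nsmul_eq_mul]
    rw [← mul_assoc, mul_one_div]
    exact div_self_le_one _
  have hlog (i : Fin m) (j : Fin n) : -Real.log (piRef m n i j) = Real.log (m * n) := by
    rw [piRef, one_div, Real.log_inv, neg_neg]
  calc KLmat P (piRef m n)
      ≤ ∑ i, ∑ j, (P i j * (Real.log (m * n) - 1) + piRef m n i j) := by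
        refine sum_le_sum fun i _ => sum_le_sum fun j _ => ?_
        rw [← hlog i j]
        exact klTerm_le_of_le_one (hP i j) (hle i j) (piRef_pos i j).ne'
    _ = Real.log (m * n) - 1 + ∑ i, ∑ j, piRef m n i j := by
        simp only [sum_add_distrib, ← sum_mul, hsum, one_mul]
    _ ≤ Real.log (m * n) := by linarith

end Divergence

section RegularizedMinimizer

variable {m n : ℕ} {p : Fin m → ℝ} {q : Fin n → ℝ} {c P Q : Matrix (Fin m) (Fin n) ℝ} {α β : ℝ}

lemma Freg_segment_le (hp : ∀ i, 0 < p i) (hα : 0 ≤ α) (hβ : 0 ≤ β)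
    (hP : ∀ i j, 0 ≤ P i j) (hQ : ∀ i j, 0 ≤ Q i j) {t : ℝ} (ht0 : 0 < t) (ht1 : t ≤ 1) :
    Freg c p α β ((1 - t) • P + t • Q) ≤ (1 - t) * Freg c p α β P + t * Freg c p α β Q +
      β⁻¹ * (t * Real.log t * ∑ i, ∑ j, if P i j = 0 then Q i j else 0) := by
  have hvec : KLvec ((1 - t) • rowSum P + t • rowSum Q) p ≤
      (1 - t) * KLvec (rowSum P) p + t * KLvec (rowSum Q) p :=
    (convexOn_KLvec hp).2 (fun i => sum_nonneg fun j _ => hP i j)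
      (fun i => sum_nonneg fun j _ => hQ i j) (sub_nonneg.2 ht1) ht0.le (sub_add_cancel 1 t)
  have hmat := KLmat_segment_le hP hQ piRef_pos ht0 ht1
  unfold Freg
  rw [frob_add, frob_smul, frob_smul, rowSum_add, rowSum_smul, rowSum_smul]
  linear_combination α⁻¹ * hvec + β⁻¹ * hmat

lemma pos_of_isMinOn_Freg (hp : ∀ i, 0 < p i) (hq : ∀ j, 0 < q j) (hα : 0 ≤ α) (hβ : 0 < β)
    (hP : P ∈ GammaStar q) (hmin : IsMinOn (Freg c p α β) (GammaStar q) P)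
    (i : Fin m) (j : Fin n) : 0 < P i j := by
  have : NeZero m := ⟨i.pos.ne'⟩
  obtain ⟨Q, hQq, hQ⟩ := exists_pos_mem_GammaStar (m := m) hq
  refine (hP.1 i j).lt_of_ne' fun hzero => ?_
  let w := ∑ i, ∑ j, if P i j = 0 then Q i j else 0
  have hterm (i j) : 0 ≤ if P i j = 0 then Q i j else 0 := by
    split_ifs
    exacts [(hQ i j).le, le_rfl]
  have hw : 0 < w := sum_pos' (fun i _ => sum_nonneg fun j _ => hterm i j)
    ⟨i, mem_univ i, sum_pos' (fun j _ => hterm i j) ⟨j, mem_univ j, by simp [hzero, hQ i j]⟩⟩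
  obtain ⟨t, hlog, ht0, ht1⟩ : ∃ t : ℝ,
      Real.log t < (Freg c p α β P - Freg c p α β Q) * β / w ∧ 0 < t ∧ t < 1 :=
    ((Real.tendsto_log_nhdsGT_zero.eventually_lt_atBot _).and
      (Ioo_mem_nhdsGT one_pos)).exists
  have hdecrease : Freg c p α β Q + β⁻¹ * (Real.log t * w) < Freg c p α β P := by
    rw [lt_div_iff₀ hw] at hlog
    have := (inv_mul_lt_iff₀' hβ).2 hlog
    linarith
  have hsegment := Freg_segment_le (c := c) hp hα hβ.le hP.1 hQq.1 ht0 ht1.le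
  have hle := isMinOn_iff.1 hmin _
    (convex_GammaStar hP hQq (sub_nonneg.2 ht1.le) ht0.le (sub_add_cancel 1 t))
  have := mul_lt_mul_of_pos_left hdecrease ht0
  linarith

/-- The gradient of `Freg c p α β` at an entrywise positive matrix `P`, with respect to the
Frobenius inner product. -/
def FregGrad (c : Matrix (Fin m) (Fin n) ℝ) (p : Fin m → ℝ) (α β : ℝ)
    (P : Matrix (Fin m) (Fin n) ℝ) : Matrix (Fin m) (Fin n) ℝ :=
  fun i j => c i j + α⁻¹ * Real.log (rowSum P i / p i) + β⁻¹ * Real.log (P i j / piRef m n i j)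

lemma frob_FregGrad (c : Matrix (Fin m) (Fin n) ℝ) (p : Fin m → ℝ) (α β : ℝ)
    (P D : Matrix (Fin m) (Fin n) ℝ) :
    frob (FregGrad c p α β P) D = frob c D +
      α⁻¹ * ∑ i, rowSum D i * Real.log (rowSum P i / p i) +
      β⁻¹ * ∑ i, ∑ j, D i j * Real.log (P i j / piRef m n i j) := by
  simp only [frob, FregGrad, rowSum, mul_sum, sum_mul, ← sum_add_distrib]
  exact sum_congr rfl fun i _ => sum_congr rfl fun j _ => by ring

lemma hasDerivAt_Freg (hp : ∀ i, p i ≠ 0) (hP : ∀ i j, P i j ≠ 0) (hrow : ∀ i, rowSum P i ≠ 0)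
    (D : Matrix (Fin m) (Fin n) ℝ) :
    HasDerivAt (fun s : ℝ => Freg c p α β (P + s • D)) (frob (FregGrad c p α β P) D) 0 := by
  have hfrob : HasDerivAt (fun s : ℝ => frob c (P + s • D)) (frob c D) 0 := by
    simpa [frob_add, frob_smul] using
      ((hasDerivAt_id (0 : ℝ)).mul_const (frob c D)).const_add (frob c P)
  have hvec : HasDerivAt (fun s : ℝ => KLvec (rowSum (P + s • D)) p)
      (∑ i, rowSum D i * Real.log (rowSum P i / p i)) 0 := by
    simpa only [rowSum_add, rowSum_smul] using hasDerivAt_KLvec hrow hp (rowSum D)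
  have hmat := hasDerivAt_KLmat hP (fun i j => (piRef_pos i j).ne') D
  rw [frob_FregGrad]
  exact (hfrob.add (hvec.const_mul α⁻¹)).add (hmat.const_mul β⁻¹)

lemma Freg_eq_add_frob_FregGrad_add (hp : ∀ i, p i ≠ 0) (hP : ∀ i j, P i j ≠ 0)
    (hrow : ∀ i, rowSum P i ≠ 0) (Q : Matrix (Fin m) (Fin n) ℝ) :
    Freg c p α β Q = Freg c p α β P + frob (FregGrad c p α β P) (Q - P) +
      α⁻¹ * KLvec (rowSum Q) (rowSum P) + β⁻¹ * KLmat Q P := by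
  have hrowSub (i) : rowSum (Q - P) i = rowSum Q i - rowSum P i := sum_sub_distrib ..
  rw [frob_FregGrad, frob_sub, Freg, Freg, KLvec_eq_add_add_KLvec (a := rowSum Q) hrow hp,
    KLmat_eq_add_add_KLmat (P := Q) hP fun i j => (piRef_pos i j).ne']
  simp only [hrowSub, Matrix.sub_apply]
  ring

lemma eventually_add_smul_mem_GammaStar (hPq : P ∈ GammaStar q) (hP : ∀ i j, 0 < P i j)
    {D : Matrix (Fin m) (Fin n) ℝ} (hD : colSum D = 0) :
    ∀ᶠ s in 𝓝 (0 : ℝ), P + s • D ∈ GammaStar q := by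
  have hpos : ∀ᶠ s in 𝓝 (0 : ℝ), ∀ i j, 0 < P i j + s * D i j := by
    refine eventually_all.2 fun i => eventually_all.2 fun j => ?_
    have hcont : Continuous fun s : ℝ => P i j + s * D i j := by fun_prop
    exact hcont.continuousAt.eventually (lt_mem_nhds (by simpa using hP i j))
  filter_upwards [hpos] with s hs
  refine ⟨fun i j => (hs i j).le, ?_⟩
  rw [colSum_add, colSum_smul, hD, smul_zero, add_zero, hPq.2]

lemma frob_FregGrad_eq_zero (hp : ∀ i, p i ≠ 0) (hP : ∀ i j, 0 < P i j)
    (hrow : ∀ i, rowSum P i ≠ 0) (hPq : P ∈ GammaStar q)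
    (hmin : IsMinOn (Freg c p α β) (GammaStar q) P)
    {D : Matrix (Fin m) (Fin n) ℝ} (hD : colSum D = 0) :
    frob (FregGrad c p α β P) D = 0 := by
  have hlocal : IsLocalMin (fun s : ℝ => Freg c p α β (P + s • D)) 0 := by
    filter_upwards [eventually_add_smul_mem_GammaStar hPq hP hD] with s hs
    simpa only [zero_smul, add_zero] using isMinOn_iff.1 hmin _ hs
  exact hlocal.hasDerivAt_eq_zero (hasDerivAt_Freg hp (fun i j => (hP i j).ne') hrow D)

/-- `v` is the Lagrange multiplier of the column constraint `πᵀ𝟙 = q`. -/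
lemma exists_FregGrad_eq_of_isMinOn (hp : ∀ i, p i ≠ 0) (hP : ∀ i j, 0 < P i j)
    (hrow : ∀ i, rowSum P i ≠ 0) (hPq : P ∈ GammaStar q)
    (hmin : IsMinOn (Freg c p α β) (GammaStar q) P) :
    ∃ v : Fin n → ℝ, ∀ i j, FregGrad c p α β P i j = v j := by
  rcases isEmpty_or_nonempty (Fin m) with hempty | ⟨⟨i₀⟩⟩
  · exact ⟨0, hempty.elim⟩
  refine ⟨FregGrad c p α β P i₀, fun i j => ?_⟩
  have hD : colSum (Matrix.single i j 1 - Matrix.single i₀ j 1 : Matrix (Fin m) (Fin n) ℝ) = 0 := by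
    rw [colSum_sub, colSum_single, colSum_single, sub_self]
  have h := frob_FregGrad_eq_zero hp hP hrow hPq hmin hD
  rw [frob_sub, frob_single, frob_single, mul_one, mul_one] at h
  exact sub_eq_zero.1 h

lemma mem_scalingSet_of_FregGrad_eq (hβ : β ≠ 0) (hP : ∀ i j, 0 < P i j) {v : Fin n → ℝ}
    (hv : ∀ i j, FregGrad c p α β P i j = v j) : P ∈ scalingSet c β := by
  refine ⟨fun i => Real.exp (-(β * (α⁻¹ * Real.log (rowSum P i / p i)))),
    fun j => Real.exp (β * v j) * (1 / (m * n)), fun i => (Real.exp_pos _).le,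
    fun j => by positivity, ?_⟩
  ext i j
  have hlog : Real.log (P i j / piRef m n i j) =
      -(β * (α⁻¹ * Real.log (rowSum P i / p i))) + -(β * c i j) + β * v j := by
    rw [← hv i j, FregGrad]
    field_simp
    ring
  calc P i j = Real.exp (Real.log (P i j / piRef m n i j)) * piRef m n i j := by
        rw [Real.exp_log (div_pos (hP i j) (piRef_pos i j)),
          div_mul_cancel₀ _ (piRef_pos i j).ne']
    _ = _ := by
        rw [hlog, Real.exp_add, Real.exp_add, mul_assoc]
        rfl

lemma Freg_eq_add_of_FregGrad_eq (hp : ∀ i, p i ≠ 0) (hP : ∀ i j, P i j ≠ 0)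
    (hrow : ∀ i, rowSum P i ≠ 0) {v : Fin n → ℝ} (hv : ∀ i j, FregGrad c p α β P i j = v j)
    (hcol : colSum Q = colSum P) :
    Freg c p α β Q = Freg c p α β P + α⁻¹ * KLvec (rowSum Q) (rowSum P) + β⁻¹ * KLmat Q P := by
  rw [Freg_eq_add_frob_FregGrad_add hp hP hrow, frob_eq_sum_colSum hv, colSum_sub, hcol]
  simp

lemma KLvec_rowSum_le_of_FregGrad_eq (hα : 0 < α) (hβ : 0 < β) (hp : ∀ i, p i ≠ 0)
    (hP : ∀ i j, 0 < P i j) (hrow : ∀ i, rowSum P i ≠ 0) {v : Fin n → ℝ}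
    (hv : ∀ i j, FregGrad c p α β P i j = v j) (hQ : ∀ i j, 0 ≤ Q i j)
    (hQsum : ∑ i, ∑ j, Q i j = 1) (hcol : colSum Q = colSum P)
    (hle : α * frob c Q + KLvec (rowSum Q) p ≤ α * frob c P + KLvec (rowSum P) p) :
    KLvec (rowSum Q) (rowSum P) ≤ α / β * Real.log (m * n) := by
  have hexpand := Freg_eq_add_of_FregGrad_eq hp (fun i j => (hP i j).ne') hrow hv hcol
  have hKL : KLvec (rowSum Q) (rowSum P) =
      (α * frob c Q + KLvec (rowSum Q) p) - (α * frob c P + KLvec (rowSum P) p) +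
        α / β * (KLmat Q (piRef m n) - KLmat P (piRef m n) - KLmat Q P) := by
    simp only [Freg] at hexpand
    field_simp at hexpand ⊢
    linear_combination -hexpand
  have hentropy : KLmat Q (piRef m n) - KLmat P (piRef m n) - KLmat Q P ≤ Real.log (m * n) := by
    linarith [KLmat_piRef_le_log hQ hQsum, KLmat_nonneg (fun i j => (hP i j).le) piRef_pos,
      KLmat_nonneg hQ hP]
  have := mul_le_mul_of_nonneg_left hentropy (div_pos hα hβ).le
  linarith

end RegularizedMinimizer

theorem online_vs_regularization_path_l1_general
    {m n : ℕ} (p : Fin m → ℝ) (q : Fin n → ℝ) (c : Matrix (Fin m) (Fin n) ℝ)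
    (hp : ∀ i, 0 < p i) (hq : q ∈ simplexPos n)
    (α β : ℝ) (hα : 0 < α) (hβ : 0 < β)
    (πonl : Matrix (Fin m) (Fin n) ℝ)
    (hπonlmem : πonl ∈ GammaStar q)
    (hπonlopt : ∀ π' ∈ scalingSet c β ∩ GammaStar q,
      α * frob c πonl + KLvec (rowSum πonl) p ≤ α * frob c π' + KLvec (rowSum π') p)
    (πreg : Matrix (Fin m) (Fin n) ℝ)
    (hπregmem : πreg ∈ GammaStar q)
    (hπregopt : ∀ π' ∈ GammaStar (m := m) q, Freg c p α β πreg ≤ Freg c p α β π') :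
    l1vec (fun i => rowSum πonl i - rowSum πreg i) ≤
      Real.sqrt (2 * α * Real.log (m * n) / β) := by
  have : NeZero n := neZero_of_mem_simplexPos hq
  have hp₀ (i : Fin m) : p i ≠ 0 := (hp i).ne'
  have hpos := pos_of_isMinOn_Freg hp hq.1 hα.le hβ hπregmem (isMinOn_iff.2 hπregopt)
  have hrow := rowSum_pos hpos
  have hrow₀ (i : Fin m) : rowSum πreg i ≠ 0 := (hrow i).ne'
  have honl := rowSum_mem_simplexNN hq.2 hπonlmem
  obtain ⟨v, hv⟩ :=
    exists_FregGrad_eq_of_isMinOn hp₀ hpos hrow₀ hπregmem (isMinOn_iff.2 hπregopt)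
  have hscaling : πreg ∈ scalingSet c β := mem_scalingSet_of_FregGrad_eq hβ.ne' hpos hv
  have hKL : KLvec (rowSum πonl) (rowSum πreg) ≤ α / β * Real.log (m * n) :=
    KLvec_rowSum_le_of_FregGrad_eq hα hβ hp₀ hpos hrow₀ hv hπonlmem.1 honl.2
      (hπonlmem.2.trans hπregmem.2.symm) (hπonlopt πreg ⟨hscaling, hπregmem⟩)
  refine Real.le_sqrt_of_sq_le ?_
  calc l1vec (fun i => rowSum πonl i - rowSum πreg i) ^ 2
      ≤ 2 * KLvec (rowSum πonl) (rowSum πreg) :=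
        sq_l1vec_sub_le_two_mul_KLvec honl ⟨hrow, (rowSum_mem_simplexNN hq.2 hπregmem).2⟩
    _ ≤ 2 * (α / β * Real.log (m * n)) := by gcongr
    _ = 2 * α * Real.log (m * n) / β := by ring

/-- Proposition 1: online vs. regularization paths, ℓ¹ bound.
`‖π^onl_t 𝟙 - π^reg_t 𝟙‖₁ ≤ √(2 α_t log(mn) / β_t)`. -/
theorem online_vs_regularization_path_l1
    {m n : ℕ} (p : Fin m → ℝ) (q : Fin n → ℝ) (c : Matrix (Fin m) (Fin n) ℝ)
    (hp : p ∈ simplexPos m) (hq : q ∈ simplexPos n)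
    (α β : ℝ) (hα : 0 < α) (hβ : 0 < β)
    (πonl : Matrix (Fin m) (Fin n) ℝ)
    (hπonlmem : πonl ∈ scalingSet c β ∩ GammaStar q)
    (hπonlopt : ∀ π' ∈ scalingSet c β ∩ GammaStar q,
      α * frob c πonl + KLvec (rowSum πonl) p ≤ α * frob c π' + KLvec (rowSum π') p)
    (πreg : Matrix (Fin m) (Fin n) ℝ)
    (hπregmem : πreg ∈ GammaStar q)
    (hπregopt : ∀ π' ∈ GammaStar (m := m) q, Freg c p α β πreg ≤ Freg c p α β π') :
    l1vec (fun i => rowSum πonl i - rowSum πreg i) ≤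
      Real.sqrt (2 * α * Real.log (m * n) / β) :=
  online_vs_regularization_path_l1_general p q c hp.1 hq α β hα hβ πonl hπonlmem.2 hπonlopt
    πreg hπregmem hπregopt

end
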